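/- (Noncommutative Cartan uniqueness theorem.) Let F : [B(H)^n]_γ → [B(H)^n]_γ be a free holomorphic map such that F(0)=0 and F'(0)=I_n (the identity on ℂ^n). Then F(X_1,...,X_n) = (X_1,...,X_n) for every (X_1,...,X_n) ∈ [B(H)^n]_γ. -/

import Mathlib

noncomputable section

open Filter

namespace NC

variable {H : Type*} [NormedAddCommGroup H] [InnerProductSpace ℂ H] [CompleteSpace H]

/-- The product `X_α = X_{i₁} ⋯ X_{i_k}` for a word `α = g_{i₁} ⋯ g_{i_k}`. -/
def wordProd {n : ℕ} (X : Fin n → H →L[ℂ] H) (w : List (Fin n)) : H →L[ℂ] H :=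
  (w.map X).prod

/-- The row norm `‖X₁X₁^* + ⋯ + XₙXₙ^*‖^{1/2}` of a tuple. -/
def rowNorm {n : ℕ} (X : Fin n → H →L[ℂ] H) : ℝ :=
  Real.sqrt ‖∑ i, X i * ContinuousLinearMap.adjoint (X i)‖

/-- The open operatorial ball `[B(H)ⁿ]_γ`. -/
def ball (n : ℕ) (H : Type*) [NormedAddCommGroup H] [InnerProductSpace ℂ H]
    [CompleteSpace H] (γ : ℝ) : Set (Fin n → H →L[ℂ] H) :=
  {X | rowNorm X < γ}

/-- The closed operatorial ball `[B(H)ⁿ]_γ⁻`. -/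
def cball (n : ℕ) (H : Type*) [NormedAddCommGroup H] [InnerProductSpace ℂ H]
    [CompleteSpace H] (γ : ℝ) : Set (Fin n → H →L[ℂ] H) :=
  {X | rowNorm X ≤ γ}

/-- The homogeneous part of degree `k` of the power series with coefficients `a`,
evaluated at `X`:  `∑_{|α|=k} a_α X_α`. -/
def homog {n : ℕ} (a : List (Fin n) → ℂ) (X : Fin n → H →L[ℂ] H) (k : ℕ) :
    H →L[ℂ] H :=
  ∑ w : Fin k → Fin n, a (List.ofFn w) • wordProd X (List.ofFn w)

/-- `RepOn γ a F` means that the free power series with coefficients `a` converges in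
operator norm to `F X` at every point `X` of the open ball `[B(H)ⁿ]_γ`; i.e. `F` is the
free holomorphic function with coefficients `a` on `[B(H)ⁿ]_γ`. -/
def RepOn {n : ℕ} (γ : ℝ) (a : List (Fin n) → ℂ)
    (F : (Fin n → H →L[ℂ] H) → H →L[ℂ] H) : Prop :=
  ∀ X ∈ ball n H γ,
    Tendsto (fun N => ∑ k ∈ Finset.range N, homog a X k) atTop (nhds (F X))

/-- `F` is a free holomorphic function (with scalar coefficients) on `[B(H)ⁿ]_γ`. -/
def IsFreeHolo {n : ℕ} (γ : ℝ) (F : (Fin n → H →L[ℂ] H) → H →L[ℂ] H) : Prop :=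
  ∃ a, RepOn γ a F

/-- `F` is a free holomorphic map `[B(H)ⁿ]_γ → B(H)^m`. -/
def IsFreeHoloMap {n m : ℕ} (γ : ℝ)
    (F : (Fin n → H →L[ℂ] H) → Fin m → H →L[ℂ] H) : Prop :=
  ∀ i, IsFreeHolo γ fun X => F X i

/-- `Ψ` is a free holomorphic automorphism of `[B(H)ⁿ]_γ`: a free holomorphic map of the
ball to itself admitting a free holomorphic inverse. -/
def IsFreeAut {n : ℕ} (γ : ℝ) (Ψ : (Fin n → H →L[ℂ] H) → Fin n → H →L[ℂ] H) : Prop :=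
  IsFreeHoloMap γ Ψ ∧ Set.MapsTo Ψ (ball n H γ) (ball n H γ) ∧
    ∃ Φ, IsFreeHoloMap γ Φ ∧ Set.MapsTo Φ (ball n H γ) (ball n H γ) ∧
      (∀ X ∈ ball n H γ, Φ (Ψ X) = X) ∧ ∀ X ∈ ball n H γ, Ψ (Φ X) = X

end NC

/-!
On an infinite-dimensional `H` there are isometries `S₁, …, Sₙ` with orthogonal ranges and a unit
vector `Ω` orthogonal to all of them: a copy of the left creation operators and the vacuum of the
full Fock space. The vectors `S_α Ω` are orthonormal, so if `f = ∑ a_α X_α` on the ball, the number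
`a_α r^|α|` is the Fourier coefficient of `f(rS) Ω` along `S_α Ω`. When `‖f‖ ≤ M` on the ball,
Bessel's inequality and `r → γ` give `∑ |a_α|² γ^(2|α|) ≤ M²`. For the `i`-th component of `F` the
bound is `M = γ`, and the word `g_i` alone already contributes `γ²`; all other coefficients vanish.
-/

namespace NC

section IsometriesWithOrthogonalRanges

variable {𝕜 E F : Type*} [RCLike 𝕜] [NormedAddCommGroup E] [InnerProductSpace 𝕜 E]
  [NormedAddCommGroup F] [InnerProductSpace 𝕜 F]

lemma infinite_of_hilbertBasis {ι : Type*} (b : HilbertBasis ι 𝕜 E)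
    (hE : ¬ FiniteDimensional 𝕜 E) : Infinite ι := by
  by_contra hι
  have : Fintype ι := fintypeOfNotInfinite hι
  exact hE b.toOrthonormalBasis.toBasis.finiteDimensional_of_finite

lemma inner_map_eq_zero_of_hilbertBasis {ι : Type*} (b : HilbertBasis ι 𝕜 E) (T : E →L[𝕜] F)
    {z : F} (hz : ∀ i, inner 𝕜 z (T (b i)) = 0) (x : E) : inner 𝕜 z (T x) = 0 := by
  have hT : (innerSL 𝕜 z).comp T = 0 :=
    ContinuousLinearMap.ext_on
      (Submodule.dense_iff_topologicalClosure_eq_top.2 b.dense_span) <| by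
        rintro _ ⟨i, rfl⟩
        simpa using hz i
  simpa using DFunLike.congr_fun hT x

lemma exists_linearIsometry_apply_hilbertBasis_eq [CompleteSpace F] {ι : Type*}
    (b : HilbertBasis ι 𝕜 E) {v : ι → F} (hv : Orthonormal 𝕜 v) :
    ∃ T : E →ₗᵢ[𝕜] F, ∀ i, T (b i) = v i := by
  classical
  refine ⟨hv.orthogonalFamily.linearIsometry.comp b.repr.toLinearIsometry, fun i => ?_⟩
  simp [b.repr_self, hv.orthogonalFamily.linearIsometry_apply_single]

lemma nonempty_prod_embedding (κ ι : Type*) [Countable κ] [Infinite ι] :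
    Nonempty (κ × ι ↪ ι) := by
  obtain ⟨f, hf⟩ := exists_injective_nat κ
  obtain ⟨e⟩ : Nonempty (ι × ι ≃ ι) := Cardinal.eq.1 (by simp)
  exact ⟨(Function.Embedding.prodMap (.trans ⟨f, hf⟩ (Infinite.natEmbedding ι)) (.refl ι)).trans
    e.toEmbedding⟩

lemma exists_orthogonalFamily_linearIsometry [CompleteSpace E] (hE : ¬ FiniteDimensional 𝕜 E)
    (κ : Type*) [Countable κ] :
    ∃ S : κ → E →ₗᵢ[𝕜] E, OrthogonalFamily 𝕜 (fun _ => E) S := by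
  obtain ⟨ι, b, -⟩ := exists_hilbertBasis 𝕜 E
  have : Infinite ι := infinite_of_hilbertBasis b hE
  obtain ⟨φ⟩ := nonempty_prod_embedding κ ι
  have hv : Orthonormal 𝕜 (b ∘ φ) := b.orthonormal.comp φ φ.injective
  choose S hS using fun i => exists_linearIsometry_apply_hilbertBasis_eq b
    (hv.comp (Prod.mk i) (Prod.mk_right_injective i))
  refine ⟨S, fun i j hij x y => ?_⟩
  refine inner_map_eq_zero_of_hilbertBasis b (S j).toContinuousLinearMap (fun l => ?_) y
  refine inner_eq_zero_symm.1 ?_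
  refine inner_map_eq_zero_of_hilbertBasis b (S i).toContinuousLinearMap (fun k => ?_) x
  simpa [hS] using hv.inner_eq_zero (i := (j, l)) (j := (i, k)) (by simp [hij.symm])

end IsometriesWithOrthogonalRanges

lemma sum_ofFn_eq_ite {ι M : Type*} [Fintype ι] [AddCommMonoid M] {g : List ι → M} {w : List ι}
    (hg : ∀ v ≠ w, g v = 0) (k : ℕ) :
    ∑ v : Fin k → ι, g (List.ofFn v) = if k = w.length then g w else 0 := by
  split_ifs with hk
  · subst hk
    rw [Fintype.sum_eq_single w.get fun v hv => hg _ fun h => hv <| List.ofFn_injective <| by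
      rw [h, List.ofFn_get], List.ofFn_get]
  · refine Finset.sum_eq_zero fun v _ => hg _ fun h => hk ?_
    rw [← h, List.length_ofFn]

variable {H : Type*} [NormedAddCommGroup H] [InnerProductSpace ℂ H] {n : ℕ}

lemma wordProd_smul (c : ℂ) (X : Fin n → H →L[ℂ] H) (w : List (Fin n)) :
    wordProd (c • X) w = c ^ w.length • wordProd X w := by
  induction w with
  | nil => simp [wordProd]
  | cons i w ih =>
    simp only [wordProd, List.map_cons, List.prod_cons, List.length_cons] at ih ⊢
    rw [ih, Pi.smul_apply, smul_mul_smul_comm, pow_succ']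

lemma inner_homog_smul_apply {S : Fin n → H →L[ℂ] H} {Ω : H}
    (hΩ : Orthonormal ℂ fun w => wordProd S w Ω) (a : List (Fin n) → ℂ) (r : ℂ)
    (w : List (Fin n)) (k : ℕ) :
    inner ℂ (wordProd S w Ω) (homog a (r • S) k Ω) =
      if k = w.length then a w * r ^ w.length else 0 := by
  have hinner (v : List (Fin n)) : inner ℂ (wordProd S w Ω) ((a v • wordProd (r • S) v) Ω) =
      if w = v then a v * r ^ v.length else 0 := by
    simp [wordProd_smul, orthonormal_iff_ite.1 hΩ]
  rw [homog, sum_apply, inner_sum,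
    sum_ofFn_eq_ite (w := w)
      (g := fun v => inner ℂ (wordProd S w Ω) ((a v • wordProd (r • S) v) Ω))
      fun v hv => (hinner v).trans (if_neg hv.symm),
    hinner, if_pos rfl]

lemma orthonormal_wordProd {S : Fin n → H →ₗᵢ[ℂ] H} (hS : OrthogonalFamily ℂ (fun _ => H) S)
    {Ω : H} (hΩ : ‖Ω‖ = 1) (hSΩ : ∀ i x, inner ℂ (S i x) Ω = 0) :
    Orthonormal ℂ fun w => wordProd (fun i => (S i).toContinuousLinearMap) w Ω := by
  classical
  refine orthonormal_iff_ite.2 fun v => ?_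
  induction v with
  | nil =>
    rintro (_ | ⟨j, w⟩)
    · simp [wordProd, inner_self_eq_norm_sq_to_K, hΩ]
    · simpa [wordProd, inner_eq_zero_symm] using hSΩ j _
  | cons i v ih =>
    rintro (_ | ⟨j, w⟩)
    · simpa [wordProd] using hSΩ i _
    · obtain rfl | hij := eq_or_ne i j
      · simpa [wordProd] using ih w
      · simpa [wordProd, hij] using hS hij _ _

variable [CompleteSpace H]

lemma rowNorm_nonneg (X : Fin n → H →L[ℂ] H) : 0 ≤ rowNorm X :=
  Real.sqrt_nonneg _

lemma rowNorm_smul (c : ℂ) (X : Fin n → H →L[ℂ] H) : rowNorm (c • X) = ‖c‖ * rowNorm X := by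
  have hsum : ∑ i, (c • X) i * ContinuousLinearMap.adjoint ((c • X) i) =
      (c * star c) • ∑ i, X i * ContinuousLinearMap.adjoint (X i) := by
    rw [Finset.smul_sum]
    refine Finset.sum_congr rfl fun i _ => ?_
    rw [Pi.smul_apply, map_smulₛₗ, smul_mul_smul_comm, starRingEnd_apply]
  rw [rowNorm, hsum, norm_smul, CStarRing.norm_self_mul_star,
    Real.sqrt_mul (by positivity), Real.sqrt_mul_self (norm_nonneg c), rowNorm]

lemma smul_mem_ball {γ : ℝ} {c : ℂ} (hc : ‖c‖ < γ) {X : Fin n → H →L[ℂ] H} (hX : rowNorm X ≤ 1) :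
    c • X ∈ ball n H γ := by
  refine lt_of_le_of_lt ?_ hc
  rw [rowNorm_smul]
  exact mul_le_of_le_one_right (norm_nonneg c) hX

lemma norm_apply_le_rowNorm (X : Fin n → H →L[ℂ] H) (i : Fin n) : ‖X i‖ ≤ rowNorm X := by
  refine Real.le_sqrt_of_sq_le ?_
  rw [sq, ← CStarRing.norm_self_mul_star]
  exact CStarAlgebra.norm_le_norm_of_nonneg_of_le (mul_star_self_nonneg (X i))
    (Finset.single_le_sum (f := fun j => X j * star (X j))
      (fun j _ => mul_star_self_nonneg (X j)) (Finset.mem_univ i))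

lemma rowNorm_le_one_of_orthogonalFamily {S : Fin n → H →ₗᵢ[ℂ] H}
    (hS : OrthogonalFamily ℂ (fun _ => H) S) :
    rowNorm (fun i => (S i).toContinuousLinearMap) ≤ 1 := by
  classical
  set T : Fin n → H →L[ℂ] H := fun i => (S i).toContinuousLinearMap
  have hT (i j : Fin n) : star (T i) * T j = if i = j then 1 else 0 := by
    refine ContinuousLinearMap.ext fun x => ext_inner_left ℂ fun y => ?_
    obtain rfl | hij := eq_or_ne i j
    · simp [T, ContinuousLinearMap.star_eq_adjoint, ContinuousLinearMap.adjoint_inner_right]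
    · simpa [T, ContinuousLinearMap.star_eq_adjoint, ContinuousLinearMap.adjoint_inner_right, hij]
        using hS hij y x
  have hproj : IsStarProjection (∑ i, T i * star (T i)) := by
    refine ⟨?_, isSelfAdjoint_sum _ fun i _ => IsSelfAdjoint.mul_star_self (T i)⟩
    simp only [IsIdempotentElem, Finset.sum_mul_sum, mul_assoc]
    simp only [← mul_assoc (star _), hT]
    simp
  exact Real.sqrt_le_one.2 hproj.norm_le

lemma exists_rowNorm_le_one_orthonormal_wordProd (hH : ¬ FiniteDimensional ℂ H) (n : ℕ) :
    ∃ (S : Fin n → H →L[ℂ] H) (Ω : H), rowNorm S ≤ 1 ∧ Orthonormal ℂ fun w => wordProd S w Ω := by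
  obtain ⟨V, hV⟩ := exists_orthogonalFamily_linearIsometry hH (Option (Fin n))
  have : Nontrivial H := not_subsingleton_iff_nontrivial.1 fun _ => hH inferInstance
  obtain ⟨x, hx⟩ := exists_norm_eq H zero_le_one
  have hS : OrthogonalFamily ℂ (fun _ => H) fun i => V (some i) :=
    hV.comp (Option.some_injective _)
  exact ⟨_, V none x, rowNorm_le_one_of_orthogonalFamily hS,
    orthonormal_wordProd hS (by simpa using hx) fun i y => hV (by simp) y x⟩

variable {γ : ℝ} {a : List (Fin n) → ℂ} {f : (Fin n → H →L[ℂ] H) → H →L[ℂ] H}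

namespace RepOn

lemma inner_apply_smul (hf : RepOn γ a f) {S : Fin n → H →L[ℂ] H} {Ω : H}
    (hΩ : Orthonormal ℂ fun w => wordProd S w Ω) {r : ℂ} (hr : r • S ∈ ball n H γ)
    (w : List (Fin n)) : inner ℂ (wordProd S w Ω) (f (r • S) Ω) = a w * r ^ w.length := by
  have hcont : Continuous fun A : H →L[ℂ] H => inner ℂ (wordProd S w Ω) (A Ω) := by fun_prop
  refine tendsto_nhds_unique ((hcont.tendsto _).comp (hf _ hr)) ?_
  simpa [Function.comp_def, inner_sum, inner_homog_smul_apply hΩ] using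
    (hasSum_ite_eq w.length (a w * r ^ w.length)).tendsto_sum_nat

lemma sum_norm_coeff_sq_le (hf : RepOn γ a f) (hH : ¬ FiniteDimensional ℂ H) (hγ : 0 < γ) {M : ℝ}
    (hM : ∀ X ∈ ball n H γ, ‖f X‖ ≤ M) (s : Finset (List (Fin n))) :
    ∑ w ∈ s, (‖a w‖ * γ ^ w.length) ^ 2 ≤ M ^ 2 := by
  obtain ⟨S, Ω, hS, hΩ⟩ := exists_rowNorm_le_one_orthonormal_wordProd hH n
  have hlt (r : ℝ) (hr : r ∈ Set.Ioo 0 γ) : ∑ w ∈ s, (‖a w‖ * r ^ w.length) ^ 2 ≤ M ^ 2 := by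
    have hnorm : ‖(r : ℂ)‖ = r := Complex.norm_of_nonneg hr.1.le
    have hrS : (r : ℂ) • S ∈ ball n H γ := smul_mem_ball (hnorm.trans_lt hr.2) hS
    have hΩ1 : ‖Ω‖ = 1 := by simpa [wordProd] using hΩ.norm_eq_one []
    calc ∑ w ∈ s, (‖a w‖ * r ^ w.length) ^ 2
        = ∑ w ∈ s, ‖inner ℂ (wordProd S w Ω) (f ((r : ℂ) • S) Ω)‖ ^ 2 := by
          simp only [hf.inner_apply_smul hΩ hrS, norm_mul, norm_pow, hnorm]
      _ ≤ ‖f ((r : ℂ) • S) Ω‖ ^ 2 := hΩ.sum_inner_products_le _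
      _ ≤ M ^ 2 := by
          gcongr
          exact (ContinuousLinearMap.unit_le_opNorm _ _ hΩ1.le).trans (hM _ hrS)
  have hcont : Continuous fun r : ℝ => ∑ w ∈ s, (‖a w‖ * r ^ w.length) ^ 2 := by fun_prop
  exact le_of_tendsto (hcont.tendsto γ |>.mono_left nhdsWithin_le_nhds)
    (eventually_of_mem (Ioo_mem_nhdsLT hγ) hlt)

lemma coeff_eq_zero_of_norm_le (hf : RepOn γ a f) (hH : ¬ FiniteDimensional ℂ H) (hγ : 0 < γ)
    {w : List (Fin n)} (hw : ∀ X ∈ ball n H γ, ‖f X‖ ≤ ‖a w‖ * γ ^ w.length)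
    {v : List (Fin n)} (hv : v ≠ w) : a v = 0 := by
  have hle := hf.sum_norm_coeff_sq_le hH hγ hw {v, w}
  rw [Finset.sum_pair hv, add_le_iff_nonpos_left] at hle
  have hzero : ‖a v‖ * γ ^ v.length = 0 := pow_eq_zero_iff two_ne_zero |>.1 <|
    hle.antisymm (sq_nonneg _)
  simpa [hγ.ne'] using hzero

lemma apply_eq_smul_wordProd (hf : RepOn γ a f) {w : List (Fin n)} (ha : ∀ v ≠ w, a v = 0)
    {X : Fin n → H →L[ℂ] H} (hX : X ∈ ball n H γ) : f X = a w • wordProd X w := by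
  have hhomog (k : ℕ) : homog a X k = if k = w.length then a w • wordProd X w else 0 :=
    sum_ofFn_eq_ite (g := fun v => a v • wordProd X v) (fun v hv => by simp [ha v hv]) k
  refine tendsto_nhds_unique (hf X hX) ?_
  simpa only [hhomog] using (hasSum_ite_eq w.length (a w • wordProd X w)).tendsto_sum_nat

end RepOn

end NC

open NC in
theorem cartan_uniqueness_general
    {H : Type*} [NormedAddCommGroup H] [InnerProductSpace ℂ H] [CompleteSpace H]
    (hH : ¬ FiniteDimensional ℂ H) {n : ℕ} {γ : ℝ}
    (F : (Fin n → H →L[ℂ] H) → Fin n → H →L[ℂ] H)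
    (a : Fin n → List (Fin n) → ℂ)
    (ha : ∀ i, RepOn γ (a i) fun X => F X i)
    (hF : ∀ X ∈ ball n H γ, ∀ i, ‖F X i‖ ≤ γ)
    (hF'0 : ∀ i, a i [i] = 1) :
    ∀ X ∈ ball n H γ, F X = X := by
  intro X hX
  funext i
  have hγ : 0 < γ := (rowNorm_nonneg X).trans_lt hX
  have hcoeff (w : List (Fin n)) (hw : w ≠ [i]) : a i w = 0 :=
    (ha i).coeff_eq_zero_of_norm_le hH hγ (by simpa [hF'0] using fun Y hY => hF Y hY i) hw
  simpa [hF'0, wordProd] using (ha i).apply_eq_smul_wordProd hcoeff hX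

open NC in
/-- **Noncommutative Cartan uniqueness theorem.**
If `F : [B(H)ⁿ]_γ → [B(H)ⁿ]_γ` is a free holomorphic map with `F(0) = 0` and `F'(0) = Iₙ`,
then `F` is the identity on `[B(H)ⁿ]_γ`. -/
theorem cartan_uniqueness
    {H : Type*} [NormedAddCommGroup H] [InnerProductSpace ℂ H] [CompleteSpace H]
    [TopologicalSpace.SeparableSpace H] (hH : ¬ FiniteDimensional ℂ H)
    {n : ℕ} {γ : ℝ} (hγ : 0 < γ)
    (F : (Fin n → H →L[ℂ] H) → Fin n → H →L[ℂ] H)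
    (a : Fin n → List (Fin n) → ℂ)
    (ha : ∀ i, RepOn γ (a i) fun X => F X i)
    (hmaps : Set.MapsTo F (ball n H γ) (ball n H γ))
    (hF0 : ∀ i, a i [] = 0)
    (hF'0 : ∀ i j, a i [j] = if i = j then 1 else 0) :
    ∀ X ∈ ball n H γ, F X = X :=
  cartan_uniqueness_general hH F a ha
    (fun X hX i => (norm_apply_le_rowNorm (F X) i).trans (hmaps hX).le) fun i => by simp [hF'0]
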